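/- Let Ω ⊆ ℝⁿ be nonempty and bounded, and let ξ be a unit vector. Then t(ξ) + t(−ξ) ≤ 0, where t(ξ) := sup {t ∈ ℝ : for every s < t, R_s^ξΩ ⊆ Ω}. In particular, either t(ξ) = t(−ξ) = 0, or at least one of t(ξ), t(−ξ) is strictly negative. -/

import Mathlib

/-!
Call `t` admissible for `η` if every reflected cap `R_s^η Ω` with `s < t` lies in `Ω`.
If `t` is admissible for `ξ`, `u` for `-ξ`, and `t + u > 0`, there are planes `x·ξ = b` and
`x·ξ = -c` with `b < t`, `c < u` and `-c < b`. A point of `Ω` below the upper plane reflects in it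
to a point of `Ω` above both planes, which then reflects in the lower plane back into `Ω`; the net
effect is the translation by `-2(b + c)ξ`. Iterating contradicts boundedness, so `t + u ≤ 0`
(`add_nonpos_of_admissible`). Admissible values exist in every direction because `Ω` is bounded
(`exists_admissible`), so the inequality passes to the two suprema, which are thereby finite.
-/

open scoped RealInnerProductSpace

/-- The reflection in the hyperplane `{x | x·ξ = t}`. -/
noncomputable def reflMap {n : ℕ} (ξ : EuclideanSpace ℝ (Fin n)) (t : ℝ)
    (x : EuclideanSpace ℝ (Fin n)) : EuclideanSpace ℝ (Fin n) :=
  x + (2 * (t - ⟪x, ξ⟫)) • ξ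

/-- The reflected cap `R_t^ξ Ω = {x | x·ξ > t and R_t^ξ x ∈ Ω}`. -/
def reflCap {n : ℕ} (Ω : Set (EuclideanSpace ℝ (Fin n)))
    (ξ : EuclideanSpace ℝ (Fin n)) (t : ℝ) : Set (EuclideanSpace ℝ (Fin n)) :=
  {x | t < ⟪x, ξ⟫ ∧ reflMap ξ t x ∈ Ω}

lemma inner_reflMap {n : ℕ} {η : EuclideanSpace ℝ (Fin n)} (hη : ‖η‖ = 1) (s : ℝ)
    (x : EuclideanSpace ℝ (Fin n)) : ⟪reflMap η s x, η⟫ = 2 * s - ⟪x, η⟫ := by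
  rw [reflMap, inner_add_left, real_inner_smul_left, real_inner_self_eq_norm_sq, hη]
  ring

lemma reflMap_reflMap {n : ℕ} {η : EuclideanSpace ℝ (Fin n)} (hη : ‖η‖ = 1) (s : ℝ)
    (x : EuclideanSpace ℝ (Fin n)) : reflMap η s (reflMap η s x) = x := by
  rw [reflMap, inner_reflMap hη, reflMap, add_assoc, ← add_smul]
  ring_nf
  simp

lemma exists_le_inner {n : ℕ} {Ω : Set (EuclideanSpace ℝ (Fin n))}
    (hbd : Bornology.IsBounded Ω) {η : EuclideanSpace ℝ (Fin n)} (hη : ‖η‖ = 1) :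
    ∃ M : ℝ, ∀ y ∈ Ω, M ≤ ⟪y, η⟫ := by
  obtain ⟨C, hC⟩ := hbd.exists_norm_le
  refine ⟨-C, fun y hy => ?_⟩
  have h := (abs_le.mp (abs_real_inner_le_norm y η)).1
  rw [hη, mul_one] at h
  linarith [hC y hy]

/-- Reflecting the part of `Ω` on the near side of an admissible plane stays in `Ω`. -/
lemma reflMap_mem_of_admissible {n : ℕ} {Ω : Set (EuclideanSpace ℝ (Fin n))}
    {η : EuclideanSpace ℝ (Fin n)} (hη : ‖η‖ = 1) {t s : ℝ}
    (ht : ∀ s < t, reflCap Ω η s ⊆ Ω) (hs : s < t)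
    {y : EuclideanSpace ℝ (Fin n)} (hy : y ∈ Ω) (hys : ⟪y, η⟫ < s) :
    reflMap η s y ∈ Ω := by
  refine ht s hs ⟨?_, ?_⟩
  · rw [inner_reflMap hη]; linarith
  · rwa [reflMap_reflMap hη]

/-- Two admissible values in opposite directions have nonpositive sum: otherwise composing the two
reflections would translate points of `Ω` by a fixed nonzero multiple of `ξ` indefinitely. -/
lemma add_nonpos_of_admissible {n : ℕ} {Ω : Set (EuclideanSpace ℝ (Fin n))} (hne : Ω.Nonempty)
    (hbd : Bornology.IsBounded Ω) {ξ : EuclideanSpace ℝ (Fin n)} (hξ : ‖ξ‖ = 1) {t u : ℝ}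
    (ht : ∀ s < t, reflCap Ω ξ s ⊆ Ω) (hu : ∀ s < u, reflCap Ω (-ξ) s ⊆ Ω) : t + u ≤ 0 := by
  by_contra! hpos
  have hξ' : ‖-ξ‖ = 1 := by rwa [norm_neg]
  -- The planes `x·ξ = b` and `x·ξ = -c` are admissible for `ξ` and `-ξ`, and `-c < b`.
  obtain ⟨b, c, hb, hc, hbc⟩ : ∃ b c, b < t ∧ c < u ∧ 0 < b + c :=
    ⟨t - (t + u) / 4, u - (t + u) / 4, by linarith, by linarith, by linarith⟩
  have reflect_down : ∀ y ∈ Ω, -c < ⟪y, ξ⟫ → ∃ z ∈ Ω, ⟪z, ξ⟫ = -2 * c - ⟪y, ξ⟫ := by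
    intro y hy hyc
    refine ⟨_, reflMap_mem_of_admissible hξ' hu hc hy (by rw [inner_neg_right]; linarith), ?_⟩
    have h := inner_reflMap hξ' c y
    rw [inner_neg_right, inner_neg_right] at h
    linarith
  have descend : ∀ k : ℕ, ∃ y ∈ Ω, ⟪y, ξ⟫ < b - k * (2 * (b + c)) := by
    intro k
    induction k with
    | zero =>
      obtain ⟨y, hy⟩ := hne
      rcases lt_or_ge ⟪y, ξ⟫ b with h | h
      · exact ⟨y, hy, by simpa using h⟩
      · obtain ⟨z, hz, hzy⟩ := reflect_down y hy (by linarith)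
        exact ⟨z, hz, by push_cast; linarith⟩
    | succ k ih =>
      obtain ⟨y, hy, hyk⟩ := ih
      have hyb : ⟪y, ξ⟫ < b := by
        have : 0 ≤ (k : ℝ) * (2 * (b + c)) := by positivity
        linarith
      have h := inner_reflMap hξ b y
      obtain ⟨z, hz, hzy⟩ := reflect_down _ (reflMap_mem_of_admissible hξ ht hb hy hyb)
        (by linarith)
      exact ⟨z, hz, by push_cast; linarith⟩
  obtain ⟨M, hM⟩ := exists_le_inner hbd hξ
  obtain ⟨k, hk⟩ := Archimedean.arch (b - M) (show 0 < 2 * (b + c) by linarith)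
  obtain ⟨y, hy, hyk⟩ := descend k
  have := hM y hy
  rw [nsmul_eq_mul] at hk
  linarith

/-- A plane lying entirely below `Ω` cuts off an empty cap, so the set of admissible values is
nonempty. -/
lemma exists_admissible {n : ℕ} {Ω : Set (EuclideanSpace ℝ (Fin n))}
    (hbd : Bornology.IsBounded Ω) {η : EuclideanSpace ℝ (Fin n)} (hη : ‖η‖ = 1) :
    {t : ℝ | ∀ s < t, reflCap Ω η s ⊆ Ω}.Nonempty := by
  obtain ⟨M, hM⟩ := exists_le_inner hbd hη
  refine ⟨M, fun s hs x ⟨hx, hxΩ⟩ => ?_⟩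
  have h := hM _ hxΩ
  rw [inner_reflMap hη] at h
  linarith

/-- For a nonempty bounded `Ω ⊆ ℝⁿ` and a unit vector `ξ`, the critical values of the moving
plane method satisfy `t(ξ) + t(-ξ) ≤ 0`; in particular either `t(ξ) = t(-ξ) = 0` or at least
one of `t(ξ)`, `t(-ξ)` is strictly negative. -/
theorem stmt10 {n : ℕ} (Ω : Set (EuclideanSpace ℝ (Fin n))) (hne : Ω.Nonempty)
    (hbd : Bornology.IsBounded Ω)
    (ξ : EuclideanSpace ℝ (Fin n)) (hξ : ‖ξ‖ = 1) :
    let tcrit : EuclideanSpace ℝ (Fin n) → ℝ :=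
      fun η => sSup {t : ℝ | ∀ s < t, reflCap Ω η s ⊆ Ω}
    tcrit ξ + tcrit (-ξ) ≤ 0 ∧
    ((tcrit ξ = 0 ∧ tcrit (-ξ) = 0) ∨ tcrit ξ < 0 ∨ tcrit (-ξ) < 0) := by
  intro tcrit
  have hξ' : ‖-ξ‖ = 1 := by rwa [norm_neg]
  have hsum : tcrit ξ + tcrit (-ξ) ≤ 0 := by
    have h : tcrit ξ ≤ -tcrit (-ξ) := by
      refine csSup_le (exists_admissible hbd hξ) fun t ht => ?_
      have h' : tcrit (-ξ) ≤ -t := by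
        refine csSup_le (exists_admissible hbd hξ') fun u hu => ?_
        linarith [add_nonpos_of_admissible hne hbd hξ ht hu]
      linarith
    linarith
  refine ⟨hsum, ?_⟩
  rcases lt_or_ge (tcrit ξ) 0 with h1 | h1
  · exact .inr (.inl h1)
  rcases lt_or_ge (tcrit (-ξ)) 0 with h2 | h2
  · exact .inr (.inr h2)
  exact .inl ⟨by linarith, by linarith⟩
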